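/- arXiv:2403.17669 — 2 statements merged into one kernel-verified Lean document; each statement's English description precedes it below -/
import Mathlib

section
/- Let d ≥ 2 and k ≥ 1 be integers. There exists a constant C = C(k, d) such that for every x ∈ 𝕊^k and every t ≥ 0: if d = 2 then Σ_{y ∈ 𝕊^k} |p_t^{rw}(x,y) − p_t^ℓ(x,y)| ≤ C log(t+2) / (√t + 1), and if d ≥ 3 then Σ_{y ∈ 𝕊^k} |p_t^{rw}(x,y) − p_t^ℓ(x,y)| ≤ C / (√t + 1). -/
open scoped Classical

noncomputable section

namespace SSEPPaper

/-- Configurations of `k` labelled particles on `ℤ^d`. -/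
abbrev Conf (d k : ℕ) := Fin k → Fin d → ℤ

/-- Euclidean norm of an integer vector in `ℤ^d`. -/
def vnorm {d : ℕ} (v : Fin d → ℤ) : ℝ := Real.sqrt (∑ j, ((v j : ℝ)) ^ 2)

/-- Euclidean norm on `(ℝ^d)^k` of an integer configuration. -/
def cnorm {d k : ℕ} (x : Conf d k) : ℝ := Real.sqrt (∑ i, ∑ j, ((x i j : ℝ)) ^ 2)

/-- The set `𝕊^k` of configurations with pairwise distinct particle positions. -/
def SSet (d k : ℕ) : Set (Conf d k) := {x | ∀ i j : Fin k, i ≠ j → x i ≠ x j}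

/-- Swap of the coordinates `i` and `j` of a configuration, i.e. `σ^{i,j}x`. -/
def cswap {d k : ℕ} (i j : Fin k) (x : Conf d k) : Conf d k := x ∘ Equiv.swap i j

/-- `δ^{i,j}w`: the configuration which agrees with `w` except that its `j`-th coordinate
is replaced by `w i`. -/
def cdelta {d k : ℕ} (i j : Fin k) (w : Conf d k) : Conf d k := Function.update w j (w i)

/-- Kronecker delta function at `y`. -/
def deltaFn {α : Type*} (y : α) : α → ℝ := fun x => if x = y then 1 else 0

/-- Generator of the labelled exclusion process, extended to all of `(ℤ^d)^k`. -/
def Lexc {d k : ℕ} (f : Conf d k → ℝ) : Conf d k → ℝ := fun x =>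
  (∑' y : Conf d k, if cnorm (y - x) = 1 ∧ y ∈ SSet d k then f y - f x else 0) +
    ∑ i : Fin k, ∑ j : Fin k,
      if i < j ∧ vnorm (x i - x j) = 1 ∧ x ∈ SSet d k then f (cswap i j x) - f x else 0

/-- Generator of `k` independent simple random walks on `ℤ^d`. -/
def Lrw {d k : ℕ} (f : Conf d k → ℝ) : Conf d k → ℝ := fun x =>
  ∑' z : Conf d k, if cnorm (z - x) = 1 then f z - f x else 0

/-- Generator (discrete Laplacian) of a single simple random walk on `ℤ^d`. -/
def Lap {d : ℕ} (f : (Fin d → ℤ) → ℝ) : (Fin d → ℤ) → ℝ := fun x =>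
  ∑' y : Fin d → ℤ, if vnorm (y - x) = 1 then f y - f x else 0

/-- Transition probabilities `p_t^ℓ(x,y) = (e^{tL^ℓ} δ_y)(x)` of the labelled exclusion
process, given by the exponential power series of the generator. -/
def ptl {d k : ℕ} (t : ℝ) (x y : Conf d k) : ℝ :=
  ∑' n : ℕ, t ^ n / n.factorial * ((Lexc (d := d) (k := k))^[n] (deltaFn y)) x

/-- Transition probabilities `p_t^{rw}(x,y) = (e^{tL^{rw}} δ_y)(x)` of `k` independent
simple random walks on `ℤ^d`. -/
def ptrw {d k : ℕ} (t : ℝ) (x y : Conf d k) : ℝ :=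
  ∑' n : ℕ, t ^ n / n.factorial * ((Lrw (d := d) (k := k))^[n] (deltaFn y)) x

/-- Transition probabilities `p_t(x,y) = (e^{tΔ} δ_y)(x)` of a single continuous-time
simple random walk on `ℤ^d`. -/
def pt1 {d : ℕ} (t : ℝ) (x y : Fin d → ℤ) : ℝ :=
  ∑' n : ℕ, t ^ n / n.factorial * ((Lap (d := d))^[n] (deltaFn y)) x

/-- The configuration `e₁₁ = ((1,0,…,0),(0,…,0),…,(0,…,0))`. -/
def e11 (d k : ℕ) : Conf d k := fun i j => if i.val = 0 ∧ j.val = 0 then 1 else 0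

set_option linter.unusedSectionVars false

lemma hs_congr {M : Type*} [AddCommMonoid M] [TopologicalSpace M] {f g : ℕ → M} {a b : M}
    (h : HasSum f a) (hf : ∀ n, g n = f n) (hab : b = a) : HasSum g b := by
  have : g = f := funext hf
  rw [this, hab]; exact h

section Abstract

variable {A : Type*} [NormedRing A] [NormedAlgebra ℝ A] [CompleteSpace A]

lemma exp_add_comm' {x y : A} (hxy : Commute x y) :
    NormedSpace.exp (x + y) = NormedSpace.exp x * NormedSpace.exp y :=
  NormedSpace.exp_add_of_commute_of_mem_ball (𝕂 := ℝ) hxy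
    ((NormedSpace.expSeries_radius_eq_top ℝ A).symm ▸ edist_lt_top _ _)
    ((NormedSpace.expSeries_radius_eq_top ℝ A).symm ▸ edist_lt_top _ _)

lemma exp_hasSum (u : ℝ) (V : A) :
    HasSum (fun n : ℕ => (u ^ n / n.factorial) • V ^ n) (NormedSpace.exp (u • V)) := by
  have := NormedSpace.exp_series_hasSum_exp' (𝕂 := ℝ) (u • V)
  refine this.congr_fun ?_ |> id
  intro n
  rw [smul_pow, smul_smul, div_eq_inv_mul]

lemma exp_real_smul_one (c : ℝ) : NormedSpace.exp (c • (1 : A)) = Real.exp c • (1 : A) := by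
  have h := NormedSpace.algebraMap_exp_comm (𝕂 := ℝ) (𝔸 := A) c
  rw [Algebra.algebraMap_eq_smul_one, Algebra.algebraMap_eq_smul_one] at h
  rw [← h, Real.exp_eq_exp_ℝ]

/-- `exp (u (M - c)) = e^{-uc} exp (u M)`. -/
lemma exp_sub_smul_one (u c : ℝ) (M : A) :
    NormedSpace.exp (u • (M - c • (1 : A))) = Real.exp (-(u * c)) • NormedSpace.exp (u • M) := by
  have : u • (M - c • (1 : A)) = (-(u * c)) • (1 : A) + u • M := by
    rw [smul_sub, smul_smul, neg_smul]; abel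
  rw [this, exp_add_comm', exp_real_smul_one, smul_one_mul]
  exact (Commute.one_left _).smul_left _

lemma exp_hasSum_mul (u : ℝ) (V : A) :
    HasSum (fun n : ℕ => (n * (u ^ n / n.factorial)) • V ^ n)
      (u • (V * NormedSpace.exp (u • V))) := by
  have h := ((exp_hasSum u V).mul_left V).const_smul u
  rw [← hasSum_nat_add_iff' 1]
  simp only [Finset.range_one, Finset.sum_singleton, Nat.cast_zero, zero_mul, zero_smul, sub_zero]
  refine h.congr_fun ?_ |> id
  intro n
  rw [mul_smul_comm, smul_smul, ← pow_succ', Nat.factorial_succ]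
  congr 1
  push_cast
  have : (n.factorial : ℝ) ≠ 0 := by positivity
  have : (n : ℝ) + 1 ≠ 0 := by positivity
  field_simp
  ring

variable [NormOneClass A]

lemma norm_exp_smul_le (u : ℝ) (hu : 0 ≤ u) (M : A) (c : ℝ) (hM : ‖M‖ ≤ c) :
    ‖NormedSpace.exp (u • M)‖ ≤ Real.exp (u * c) := by
  have h1 := exp_hasSum u M
  have h2 := exp_hasSum (A := ℝ) u c
  rw [smul_eq_mul, ← Real.exp_eq_exp_ℝ] at h2
  refine h1.norm_le_of_bounded h2 fun n => ?_
  rw [norm_smul, smul_eq_mul, Real.norm_of_nonneg (by positivity)]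
  gcongr
  exact (norm_pow_le _ _).trans (by gcongr)

lemma norm_exp_contraction (u : ℝ) (hu : 0 ≤ u) (M : A) (c : ℝ) (hM : ‖M‖ ≤ c) :
    ‖NormedSpace.exp (u • (M - c • (1 : A)))‖ ≤ 1 := by
  rw [exp_sub_smul_one, norm_smul, Real.norm_of_nonneg (Real.exp_pos _).le]
  calc _ ≤ Real.exp (-(u * c)) * Real.exp (u * c) := by
        gcongr; exact norm_exp_smul_le u hu M c hM
    _ = 1 := by rw [← Real.exp_add]; simp

lemma poisson_sum0 (u : ℝ) : HasSum (fun n : ℕ => u ^ n / n.factorial) (Real.exp u) := by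
  have := exp_hasSum (A := ℝ) u 1
  simpa [← Real.exp_eq_exp_ℝ] using this

lemma poisson_sum1 (u : ℝ) :
    HasSum (fun n : ℕ => n * (u ^ n / n.factorial)) (u * Real.exp u) := by
  have := exp_hasSum_mul (A := ℝ) u 1
  simpa [← Real.exp_eq_exp_ℝ] using this

lemma poisson_sum2 (u : ℝ) :
    HasSum (fun n : ℕ => (n : ℝ) ^ 2 * (u ^ n / n.factorial)) ((u ^ 2 + u) * Real.exp u) := by
  have h := ((poisson_sum1 u).add (poisson_sum0 u)).mul_left u
  rw [← hasSum_nat_add_iff' 1]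
  simp only [Finset.range_one, Finset.sum_singleton, Nat.cast_zero, ne_eq, OfNat.ofNat_ne_zero,
    not_false_eq_true, zero_pow, zero_mul, sub_zero]
  refine hs_congr h ?_ ?_
  · intro n
    rw [Nat.factorial_succ]
    push_cast
    have : (n.factorial : ℝ) ≠ 0 := by positivity
    have : (n : ℝ) + 1 ≠ 0 := by positivity
    field_simp
    ring
  · ring

lemma norm_grad_exp (u : ℝ) (hu : 0 < u) (V : A) (hV : ‖V‖ ≤ 1) :
    ‖(V - 1) * NormedSpace.exp (u • (V - 1))‖ ≤ 1 / Real.sqrt u := by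
  have e1 := exp_sub_smul_one u 1 V
  rw [one_smul] at e1
  rw [e1, mul_smul_comm, norm_smul, Real.norm_of_nonneg (Real.exp_pos _).le]
  have hs : 0 < Real.sqrt u := Real.sqrt_pos.2 hu
  have hss : Real.sqrt u ^ 2 = u := Real.sq_sqrt hu.le
  have h1 : HasSum (fun n : ℕ => ((n / u - 1) * (u ^ n / n.factorial)) • V ^ n)
      ((V - 1) * NormedSpace.exp (u • V)) := by
    have := ((exp_hasSum_mul u V).const_smul u⁻¹).sub (exp_hasSum u V)
    refine hs_congr this ?_ ?_
    · intro n
      rw [smul_smul, ← sub_smul]; congr 1; field_simp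
    · rw [smul_smul, inv_mul_cancel₀ hu.ne', one_smul, sub_mul, one_mul]
  have h2 : HasSum (fun n : ℕ => (Real.sqrt u * (n / u - 1) ^ 2 + 1 / Real.sqrt u) / 2 *
      (u ^ n / n.factorial)) (Real.exp u / Real.sqrt u) := by
    have := (((poisson_sum2 u).mul_left (Real.sqrt u / 2 / u ^ 2)).add
      ((poisson_sum1 u).mul_left (- Real.sqrt u / u))).add
      ((poisson_sum0 u).mul_left ((Real.sqrt u + 1 / Real.sqrt u) / 2))
    refine hs_congr this ?_ ?_
    · intro n; field_simp; (try rw [hss]); ring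
    · field_simp
      rw [hss]; ring
  have h3 : ‖(V - 1) * NormedSpace.exp (u • V)‖ ≤ Real.exp u / Real.sqrt u := by
    refine h1.norm_le_of_bounded h2 fun n => ?_
    rw [norm_smul, norm_mul, Real.norm_of_nonneg (r := u ^ n / n.factorial) (by positivity)]
    have h4 : ‖V ^ n‖ ≤ 1 := (norm_pow_le _ _).trans (pow_le_one₀ (norm_nonneg _) hV)
    have h5 : |(n : ℝ) / u - 1| ≤ (Real.sqrt u * (n / u - 1) ^ 2 + 1 / Real.sqrt u) / 2 := by
      rw [← sq_abs]
      generalize |(n : ℝ) / u - 1| = a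
      have : (Real.sqrt u * a ^ 2 + 1 / Real.sqrt u) / 2 - a
          = (Real.sqrt u * a - 1) ^ 2 / (2 * Real.sqrt u) := by field_simp; ring
      have h6 : 0 ≤ (Real.sqrt u * a - 1) ^ 2 / (2 * Real.sqrt u) := by positivity
      linarith
    have h7 : 0 ≤ u ^ n / (n.factorial : ℝ) := by positivity
    rw [Real.norm_eq_abs]
    calc _ ≤ |(n : ℝ) / u - 1| * (u ^ n / n.factorial) * 1 := by gcongr
      _ ≤ _ := by rw [mul_one]; gcongr
  calc _ ≤ Real.exp (-(u * 1)) * (Real.exp u / Real.sqrt u) := by gcongr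
    _ = _ := by rw [mul_div_assoc', ← Real.exp_add]; simp

lemma norm_grad_exp' (u : ℝ) (hu : 0 ≤ u) (V : A) (hV : ‖V‖ ≤ 1) :
    ‖(V - 1) * NormedSpace.exp (u • (V - 1))‖ ≤ 2 := by
  have h := norm_exp_contraction u hu V 1 hV
  rw [one_smul] at h
  have h2 : ‖V - 1‖ ≤ 2 := (norm_sub_le _ _).trans (by rw [norm_one]; linarith)
  calc _ ≤ _ := norm_mul_le _ _
    _ ≤ 2 * 1 := by gcongr
    _ = 2 := by norm_num

lemma norm_grad2_exp {ι : Type*} [Fintype ι] [DecidableEq ι] (V : ι → A) (hV : ∀ i, ‖V i‖ ≤ 1)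
    (hc : ∀ i j, Commute (V i) (V j)) (a b : ι) (hab : a ≠ b) (u : ℝ) (hu : 0 ≤ u) :
    ‖(V a - 1) * (V b - 1) * NormedSpace.exp (u • ∑ i, (V i - 1))‖ ≤ 5 / (1 + u) := by
  have hc' : ∀ i j, Commute (V i - 1) (V j - 1) := fun i j =>
    ((hc i j).sub_right (Commute.one_right _)).sub_left (Commute.one_left _)
  set R := ∑ i ∈ (Finset.univ.erase a).erase b, (V i - 1) with hR
  have hsum : ∑ i, (V i - 1) = (V a - 1) + ((V b - 1) + R) := by
    rw [hR, Finset.add_sum_erase (Finset.univ.erase a) (fun i => V i - 1) (by simp [hab.symm]),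
      Finset.add_sum_erase Finset.univ (fun i => V i - 1) (Finset.mem_univ a)]
  have cR : ∀ i, Commute (V i - 1) R := fun i => Commute.sum_right _ _ _ fun j _ => hc' i j
  have e : NormedSpace.exp (u • ∑ i, (V i - 1)) = NormedSpace.exp (u • (V a - 1)) *
      (NormedSpace.exp (u • (V b - 1)) * NormedSpace.exp (u • R)) := by
    rw [hsum, smul_add, exp_add_comm', smul_add, exp_add_comm']
    · exact ((cR b).smul_left u).smul_right u
    · exact (((hc' a b).add_right (cR a)).smul_left u).smul_right u
  have hRn : ‖NormedSpace.exp (u • R)‖ ≤ 1 := by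
    have : R = (∑ i ∈ (Finset.univ.erase a).erase b, V i) -
        (((Finset.univ.erase a).erase b).card : ℝ) • (1 : A) := by
      rw [hR, Finset.sum_sub_distrib]; simp [Nat.cast_smul_eq_nsmul]
    rw [this]
    refine norm_exp_contraction u hu _ _ ((norm_sum_le _ _).trans ?_)
    calc _ ≤ ∑ i ∈ (Finset.univ.erase a).erase b, (1 : ℝ) := Finset.sum_le_sum fun i _ => hV i
      _ = _ := by simp
  have e2 : (V a - 1) * (V b - 1) * NormedSpace.exp (u • ∑ i, (V i - 1)) =
      ((V a - 1) * NormedSpace.exp (u • (V a - 1))) *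
      ((V b - 1) * NormedSpace.exp (u • (V b - 1))) * NormedSpace.exp (u • R) := by
    rw [e]
    have : Commute (V b - 1) (NormedSpace.exp (u • (V a - 1))) :=
      ((hc' b a).smul_right u).exp_right
    simp only [mul_assoc]
    rw [← mul_assoc (V b - 1), this.eq, mul_assoc]
  rw [e2]
  set x := ‖(V a - 1) * NormedSpace.exp (u • (V a - 1))‖ with hx
  set y := ‖(V b - 1) * NormedSpace.exp (u • (V b - 1))‖ with hy
  have hx2 : x ≤ 2 := norm_grad_exp' u hu _ (hV a)
  have hy2 : y ≤ 2 := norm_grad_exp' u hu _ (hV b)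
  have hx0 : 0 ≤ x := norm_nonneg _
  have hy0 : 0 ≤ y := norm_nonneg _
  have hxy : x * y ≤ 5 / (1 + u) := by
    rw [le_div_iff₀ (by linarith)]
    by_cases h : u ≤ 1 / 4
    · nlinarith [mul_nonneg hx0 hy0, mul_le_mul hx2 hy2 hy0 (by norm_num)]
    · have hu' : 0 < u := by linarith
      have h1 := norm_grad_exp u hu' _ (hV a)
      have h2 := norm_grad_exp u hu' _ (hV b)
      have h3 : x * y ≤ 1 / u := by
        calc x * y ≤ (1 / Real.sqrt u) * (1 / Real.sqrt u) := by gcongr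
          _ = 1 / u := by rw [div_mul_div_comm, Real.mul_self_sqrt hu]; norm_num
      have h4 : (1 / u) * (1 + u) ≤ 5 := by
        rw [div_mul_eq_mul_div, div_le_iff₀ hu']; linarith
      nlinarith
  calc _ ≤ x * y * 1 := by
        refine (norm_mul_le _ _).trans ?_
        gcongr
        exact norm_mul_le _ _
    _ ≤ _ := by rw [mul_one]; exact hxy

end Abstract

section Semi

variable {E F : Type*} [NormedAddCommGroup E] [NormedSpace ℝ E] [CompleteSpace E]
  [NormedAddCommGroup F] [NormedSpace ℝ F] [CompleteSpace F]

/-- The semigroup `e^{tL}` of a bounded operator. -/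
def semi (t : ℝ) (L : E →L[ℝ] E) : E →L[ℝ] E := NormedSpace.exp (t • L)

lemma semi_hasSum (t : ℝ) (L : E →L[ℝ] E) (f : E) :
    HasSum (fun n : ℕ => (t ^ n / n.factorial) • (L ^ n) f) (semi t L f) := by
  have h := exp_hasSum t L
  have := (ContinuousLinearMap.apply ℝ E f).hasSum h
  exact this

lemma semi_zero (L : E →L[ℝ] E) (f : E) : semi 0 L f = f := by
  simp [semi]

lemma semi_intertwine (t : ℝ) (L : E →L[ℝ] E) (M : F →L[ℝ] F)
    (P : F →L[ℝ] E) (h : ∀ f, L (P f) = P (M f)) (f : F) :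
    semi t L (P f) = P (semi t M f) := by
  have h1 := semi_hasSum t L (P f)
  have h2 := P.hasSum (semi_hasSum t M f)
  refine h1.unique (hs_congr h2 ?_ rfl)
  intro n
  rw [map_smul]
  congr 1
  induction n with
  | zero => simp
  | succ n ih => rw [pow_succ', pow_succ', mul_apply_eq_comp, ih, h, mul_apply_eq_comp]

/-- Invariance of closed convex cones under a semigroup. -/
lemma cone_invariant (K : Set E) (hK : IsClosed K) (h0 : (0 : E) ∈ K)
    (hadd : ∀ f ∈ K, ∀ g ∈ K, f + g ∈ K) (hsmul : ∀ c : ℝ, 0 ≤ c → ∀ f ∈ K, c • f ∈ K)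
    (T : E →L[ℝ] E) (c : ℝ) (hT : ∀ f ∈ K, T f + c • f ∈ K) (s : ℝ) (hs : 0 ≤ s)
    (f : E) (hf : f ∈ K) : semi s T f ∈ K := by
  set M : E →L[ℝ] E := T + c • 1 with hM
  have e : T = M - c • 1 := by rw [hM]; abel
  rw [semi, e, exp_sub_smul_one]
  refine hsmul _ (Real.exp_pos _).le _ ?_
  have hMn : ∀ n : ℕ, (M ^ n) f ∈ K := by
    intro n
    induction n with
    | zero => simpa using hf
    | succ n ih =>
      rw [pow_succ', mul_apply_eq_comp]
      have := hT _ ih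
      simpa [hM] using this
  refine hK.mem_of_tendsto (semi_hasSum s M f) (Filter.Eventually.of_forall fun F => ?_)
  refine Finset.sum_induction _ (· ∈ K) (fun a b ha hb => hadd a ha b hb) h0 fun n _ => ?_
  exact hsmul _ (by positivity) _ (hMn n)

lemma duhamel_deriv (L M : E →L[ℝ] E) (f : E) (x : E →L[ℝ] ℝ) (t s : ℝ) :
    HasDerivAt (fun s => x (semi s L (semi (t - s) M f)))
      (x (semi s L ((L - M) (semi (t - s) M f)))) s := by
  have h1 := hasDerivAt_exp_smul_const (𝕂 := ℝ) L s
  have h2 : HasDerivAt (fun s : ℝ => NormedSpace.exp ((t - s) • M))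
      (-(M * NormedSpace.exp ((t - s) • M))) s := by
    have := (hasDerivAt_exp_smul_const' (𝕂 := ℝ) M (t - s)).scomp s
      ((hasDerivAt_id s).const_sub t)
    exact this.congr_deriv (by simp)
  have h3 := h1.mul h2
  have h4 := (x.comp (ContinuousLinearMap.apply ℝ E f)).hasFDerivAt.comp_hasDerivAt
    s h3
  refine h4.congr_deriv ?_
  simp [sub_eq_add_neg, semi]

lemma semi_grad2 [Nontrivial E] {ι : Type*} [Fintype ι] [DecidableEq ι] (V : ι → E →L[ℝ] E)
    (hV : ∀ i, ‖V i‖ ≤ 1) (hc : ∀ i j f, V i (V j f) = V j (V i f)) (a b : ι) (hab : a ≠ b)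
    (u : ℝ) (hu : 0 ≤ u) (f : E) (C : ℝ) (hf : ‖f‖ ≤ C) :
    ‖(V a - 1) ((V b - 1) (semi u (∑ i, (V i - 1)) f))‖ ≤ 5 / (1 + u) * C := by
  have h := norm_grad2_exp V hV (fun i j => ContinuousLinearMap.ext fun f => hc i j f) a b hab u hu
  have h2 := ContinuousLinearMap.le_of_opNorm_le _ h f
  refine le_trans h2 ?_
  gcongr

end Semi

section Ops

open BoundedContinuousFunction

/-- Bounded functions on a discrete space. -/
abbrev BF (α : Type) [TopologicalSpace α] := BoundedContinuousFunction α ℝ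

variable {α β : Type} [TopologicalSpace α] [DiscreteTopology α]
  [TopologicalSpace β] [DiscreteTopology β]

/-- Composition operator. -/
def compOp (s : α → β) : BF β →L[ℝ] BF α :=
  LinearMap.mkContinuous
    { toFun := fun f => ofNormedAddCommGroupDiscrete (fun x => f (s x)) ‖f‖
        (fun x => f.norm_coe_le_norm _)
      map_add' := fun f g => by ext; rfl
      map_smul' := fun c f => by ext; rfl } 1
    (fun f => by
      rw [one_mul]
      exact (norm_le (norm_nonneg _)).2 fun x => f.norm_coe_le_norm _)

@[simp] lemma compOp_apply (s : α → β) (f : BF β) (x : α) : compOp s f x = f (s x) := rfl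

lemma compOp_norm (s : α → β) : ‖compOp s‖ ≤ 1 :=
  LinearMap.mkContinuous_norm_le _ zero_le_one _

/-- Multiplication with an indicator function. -/
def cutOp (p : α → Prop) : BF α →L[ℝ] BF α :=
  LinearMap.mkContinuous
    { toFun := fun f => ofNormedAddCommGroupDiscrete (fun x => if p x then f x else 0) ‖f‖
        (fun x => by
          split_ifs
          · exact f.norm_coe_le_norm _
          · simp)
      map_add' := fun f g => by
        ext x
        change (if p x then f x + g x else 0) = (if p x then f x else 0) + (if p x then g x else 0)
        split_ifs <;> simp
      map_smul' := fun c f => by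
        ext x
        change (if p x then c * f x else 0) = c * (if p x then f x else 0)
        split_ifs <;> simp } 1
    (fun f => by
      rw [one_mul]
      refine (norm_le (norm_nonneg _)).2 fun x => ?_
      change ‖if p x then f x else 0‖ ≤ _
      split_ifs
      · exact f.norm_coe_le_norm _
      · simp)

@[simp] lemma cutOp_apply (p : α → Prop) (f : BF α) (x : α) :
    cutOp p f x = if p x then f x else 0 := rfl

lemma bf_sum_apply {ι : Type*} (s : Finset ι) (f : ι → BF α) (x : α) :
    (∑ i ∈ s, f i) x = ∑ i ∈ s, f i x := by
  simp

lemma semi_eval_hasSum (t : ℝ) (L : BF α →L[ℝ] BF α) (f : BF α) (x : α) :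
    HasSum (fun n : ℕ => t ^ n / n.factorial * (L ^ n) f x) (semi t L f x) := by
  have := (evalCLM ℝ x).hasSum (semi_hasSum t L f)
  simpa using this

end Ops

section Units

/-- Unit vectors of `ℤ^d`. -/
def uv {d : ℕ} (p : Fin d × Bool) : Fin d → ℤ := Pi.single p.1 (if p.2 then 1 else -1)

/-- Unit vectors of `(ℤ^d)^k`. -/
def cu {d k : ℕ} (q : Fin k × Fin d × Bool) : Conf d k := Pi.single q.1 (uv q.2)

lemma int_sq_sum_one {ι : Type*} [Fintype ι] [DecidableEq ι] (v : ι → ℤ)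
    (h : ∑ i, v i ^ 2 = 1) : ∃ i, ∃ b : Bool, v = Pi.single i (if b then 1 else -1) := by
  have hex : ∃ i, v i ≠ 0 := by
    by_contra hcon
    push Not at hcon
    simp [hcon] at h
  obtain ⟨i, hi⟩ := hex
  have h1 : v i ^ 2 + ∑ j ∈ Finset.univ.erase i, v j ^ 2 = 1 := by
    rw [Finset.add_sum_erase Finset.univ (fun j => v j ^ 2) (Finset.mem_univ i)]; exact h
  have h2 : 0 < v i ^ 2 := by positivity
  have h3 : 0 ≤ ∑ j ∈ Finset.univ.erase i, v j ^ 2 := Finset.sum_nonneg fun j _ => sq_nonneg _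
  have h4 : ∑ j ∈ Finset.univ.erase i, v j ^ 2 = 0 := by omega
  have h5 : v i ^ 2 = 1 := by omega
  have h6 : ∀ j, j ≠ i → v j = 0 := by
    intro j hj
    have := (Finset.sum_eq_zero_iff_of_nonneg (fun j _ => sq_nonneg (v j))).1 h4 j (by simp [hj])
    exact pow_eq_zero_iff (two_ne_zero) |>.1 this
  rcases (Int.isUnit_iff.1 (IsUnit.of_mul_eq_one (v i) (by rw [← sq, h5]))) with h7 | h7
  · refine ⟨i, true, funext fun j => ?_⟩
    by_cases hj : j = i
    · subst hj; simp [h7]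
    · simp [hj, h6 j hj]
  · refine ⟨i, false, funext fun j => ?_⟩
    by_cases hj : j = i
    · subst hj; simp [h7]
    · simp [hj, h6 j hj]

lemma single_sq_sum {ι : Type*} [Fintype ι] [DecidableEq ι] (i : ι) (b : Bool) :
    ∑ j, (Pi.single (M := fun _ : ι => ℤ) i (if b then 1 else -1) j) ^ 2 = (1 : ℤ) := by
  rw [Finset.sum_eq_single i]
  · cases b <;> simp
  · intro j _ hj; simp [hj]
  · simp

lemma vnorm_eq_one {d : ℕ} (v : Fin d → ℤ) : vnorm v = 1 ↔ ∃ p, v = uv p := by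
  have : vnorm v = 1 ↔ ∑ j, v j ^ 2 = 1 := by
    rw [vnorm, Real.sqrt_eq_one]; exact_mod_cast Iff.rfl
  rw [this]
  constructor
  · intro h
    obtain ⟨i, b, h⟩ := int_sq_sum_one v h
    exact ⟨(i, b), h⟩
  · rintro ⟨⟨i, b⟩, rfl⟩
    exact single_sq_sum i b

lemma cnorm_eq_one {d k : ℕ} (v : Conf d k) : cnorm v = 1 ↔ ∃ q, v = cu q := by
  have : cnorm v = 1 ↔ ∑ i, ∑ j, v i j ^ 2 = 1 := by
    rw [cnorm, Real.sqrt_eq_one]; exact_mod_cast Iff.rfl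
  rw [this]
  constructor
  · intro h
    rw [← Fintype.sum_prod_type' (f := fun i j => v i j ^ 2)] at h
    obtain ⟨⟨i, m⟩, b, h⟩ := int_sq_sum_one (fun p : Fin k × Fin d => v p.1 p.2) h
    refine ⟨(i, m, b), ?_⟩
    funext i' m'
    have h' := congrFun h (i', m')
    simp only at h'
    rw [h']
    simp only [cu, uv, Pi.single_apply, Prod.mk.injEq]
    by_cases h1 : i' = i <;> by_cases h2 : m' = m <;> simp [h1, h2]
  · rintro ⟨⟨i, m, b⟩, rfl⟩
    rw [Finset.sum_eq_single i]
    · simp only [cu, Pi.single_eq_same]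
      exact single_sq_sum m b
    · intro j _ hj; simp [cu, hj]
    · simp

lemma uv_injective {d : ℕ} : Function.Injective (uv (d := d)) := by
  rintro ⟨m, b⟩ ⟨m', b'⟩ h
  have h1 := congrFun h m
  simp only [uv, Pi.single_eq_same, Pi.single_apply] at h1
  by_cases hm : m = m'
  · subst hm
    cases b <;> cases b' <;> simp at h1 ⊢
  · cases b <;> simp [hm] at h1

lemma uv_ne_zero {d : ℕ} (p : Fin d × Bool) : uv p ≠ 0 := by
  intro h
  have h1 := congrFun h p.1
  cases hb : p.2 <;> simp [uv, hb] at h1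

lemma cu_injective {d k : ℕ} : Function.Injective (cu (d := d) (k := k)) := by
  rintro ⟨i, p⟩ ⟨i', p'⟩ h
  have h1 := congrFun h i
  simp only [cu, Pi.single_eq_same, Pi.single_apply] at h1
  by_cases hi : i = i'
  · subst hi
    rw [if_pos rfl] at h1
    rw [uv_injective h1]
  · rw [if_neg hi] at h1
    exact absurd h1 (uv_ne_zero p)

lemma tsum_unit {d k : ℕ} (x : Conf d k) (G : Conf d k → ℝ) :
    ∑' y : Conf d k, (if cnorm (y - x) = 1 then G y else 0) = ∑ q, G (x + cu q) := by
  rw [tsum_eq_sum (s := Finset.univ.image (fun q => x + cu q)), Finset.sum_image]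
  · refine Finset.sum_congr rfl fun q _ => ?_
    rw [if_pos]
    rw [cnorm_eq_one]
    exact ⟨q, by abel⟩
  · intro a _ b _ h
    exact cu_injective (add_left_cancel h)
  · intro y hy
    rw [if_neg]
    intro h
    obtain ⟨q, hq⟩ := (cnorm_eq_one _).1 h
    apply hy
    rw [Finset.mem_image]
    exact ⟨q, Finset.mem_univ _, by rw [← hq]; abel⟩

lemma add_cu {d k : ℕ} (x : Conf d k) (i : Fin k) (p : Fin d × Bool) :
    x + cu (i, p) = Function.update x i (x i + uv p) := by
  funext j
  by_cases h : j = i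
  · subst h; simp [cu]
  · simp [cu, h]

lemma cswap_eq {d k : ℕ} (x : Conf d k) (i j : Fin k) :
    cswap i j x = Function.update (Function.update x i (x j)) j (x i) := by
  funext l
  simp only [cswap, Function.comp, Equiv.swap_apply_def, Function.update_apply]
  split_ifs <;> simp_all

lemma cswap_mem {d k : ℕ} (x : Conf d k) (i j : Fin k) (hx : x ∈ SSet d k) :
    cswap i j x ∈ SSet d k := by
  intro a b hab
  exact hx _ _ (fun h => hab ((Equiv.swap i j).injective h))

end Units

section Generators

variable {d k : ℕ}

/-- Shift operators on configurations. -/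
def Vop (q : Fin k × Fin d × Bool) : BF (Conf d k) →L[ℝ] BF (Conf d k) :=
  compOp (fun x => x + cu q)

/-- Random walk generator as an operator. -/
def LrwOp (d k : ℕ) : BF (Conf d k) →L[ℝ] BF (Conf d k) := ∑ q, (Vop q - 1)

/-- Exclusion generator as an operator. -/
def LexcOp (d k : ℕ) : BF (Conf d k) →L[ℝ] BF (Conf d k) :=
  ∑ q, (cutOp (fun x => x + cu q ∈ SSet d k)).comp (Vop q - 1) +
  ∑ i : Fin k, ∑ j : Fin k,
    (cutOp (fun x => i < j ∧ vnorm (x i - x j) = 1 ∧ x ∈ SSet d k)).comp (compOp (cswap i j) - 1)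

lemma LrwOp_apply (f : BF (Conf d k)) (x : Conf d k) :
    LrwOp d k f x = ∑ q, (f (x + cu q) - f x) := by
  simp [LrwOp, Vop]

lemma LexcOp_apply (f : BF (Conf d k)) (x : Conf d k) :
    LexcOp d k f x = ∑ q, (if x + cu q ∈ SSet d k then f (x + cu q) - f x else 0) +
    ∑ i : Fin k, ∑ j : Fin k,
      if i < j ∧ vnorm (x i - x j) = 1 ∧ x ∈ SSet d k then f (cswap i j x) - f x else 0 := by
  have e : ∀ (p : Prop) [Decidable p] (a b : ℝ), (if p then a - b else 0) =
      (if p then a else 0) - if p then b else 0 := by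
    intro p _ a b; split_ifs <;> simp
  simp [LexcOp, Vop, e]
  congr!

lemma LrwOp_coe (f : BF (Conf d k)) : ⇑(LrwOp d k f) = Lrw f := by
  funext x
  rw [LrwOp_apply, Lrw, tsum_unit x (fun y => f y - f x)]

lemma LexcOp_coe (f : BF (Conf d k)) : ⇑(LexcOp d k f) = Lexc f := by
  funext x
  rw [LexcOp_apply, Lexc]
  congr 1
  simp only [ite_and]
  rw [tsum_unit x (fun y => if y ∈ SSet d k then f y - f x else 0)]

lemma LrwOp_pow (f : BF (Conf d k)) (n : ℕ) : ⇑((LrwOp d k ^ n) f) = Lrw^[n] f := by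
  induction n with
  | zero => simp
  | succ n ih => rw [pow_succ', mul_apply_eq_comp, LrwOp_coe, ih, Function.iterate_succ_apply']

lemma LexcOp_pow (f : BF (Conf d k)) (n : ℕ) : ⇑((LexcOp d k ^ n) f) = Lexc^[n] f := by
  induction n with
  | zero => simp
  | succ n ih => rw [pow_succ', mul_apply_eq_comp, LexcOp_coe, ih, Function.iterate_succ_apply']

/-- Bounded version of the Kronecker delta. -/
def dl (y : Conf d k) : BF (Conf d k) :=
  BoundedContinuousFunction.ofNormedAddCommGroupDiscrete (deltaFn y) 1
    (fun x => by unfold deltaFn; split_ifs <;> simp)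

lemma ptrw_eq (t : ℝ) (x y : Conf d k) : ptrw t x y = semi t (LrwOp d k) (dl y) x := by
  rw [← (semi_eval_hasSum t (LrwOp d k) (dl y) x).tsum_eq, ptrw]
  refine tsum_congr fun n => ?_
  rw [LrwOp_pow]; rfl

lemma ptl_eq (t : ℝ) (x y : Conf d k) : ptl t x y = semi t (LexcOp d k) (dl y) x := by
  rw [← (semi_eval_hasSum t (LexcOp d k) (dl y) x).tsum_eq, ptl]
  refine tsum_congr fun n => ?_
  rw [LexcOp_pow]; rfl

/-- The mixed second difference. -/
def DD (g : Conf d k → ℝ) (x : Conf d k) (i j : Fin k) : ℝ :=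
  g (Function.update x i (x j)) + g (Function.update x j (x i)) - g x - g (cswap i j x)

lemma not_mem_step (x : Conf d k) (hx : x ∈ SSet d k) (i : Fin k) (p : Fin d × Bool) :
    x + cu (i, p) ∉ SSet d k ↔ ∃ j, j ≠ i ∧ x j - x i = uv p := by
  rw [add_cu]
  constructor
  · intro h
    by_contra hcon
    push Not at hcon
    apply h
    have key : ∀ j, j ≠ i → x j ≠ x i + uv p := fun j hj h' => hcon j hj (by rw [h']; abel)
    intro a b hab
    by_cases ha : a = i
    · subst ha
      rw [Function.update_self, Function.update_of_ne hab.symm]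
      exact (key b hab.symm).symm
    · by_cases hb : b = i
      · subst hb
        rw [Function.update_self, Function.update_of_ne ha]
        exact key a ha
      · rw [Function.update_of_ne ha, Function.update_of_ne hb]
        exact hx a b hab
  · rintro ⟨j, hj, h⟩ hS
    have := hS j i hj
    rw [Function.update_self, Function.update_of_ne hj] at this
    exact this (by rw [← h]; abel)

lemma step_sum (x : Conf d k) (hx : x ∈ SSet d k) (i : Fin k) (p : Fin d × Bool)
    (G : Conf d k → ℝ) :
    (if x + cu (i, p) ∈ SSet d k then 0 else G (x + cu (i, p))) =
      ∑ j, if j ≠ i ∧ x j - x i = uv p then G (Function.update x i (x j)) else 0 := by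
  by_cases h : x + cu (i, p) ∈ SSet d k
  · rw [if_pos h]
    symm
    refine Finset.sum_eq_zero fun j _ => if_neg ?_
    intro hj
    exact (not_mem_step x hx i p).2 ⟨j, hj⟩ h
  · rw [if_neg h]
    obtain ⟨j, hj, hjp⟩ := (not_mem_step x hx i p).1 h
    rw [Finset.sum_eq_single j]
    · rw [if_pos ⟨hj, hjp⟩, add_cu, ← hjp]
      congr 2; abel
    · intro l _ hl
      refine if_neg ?_
      rintro ⟨_, h2⟩
      exact hx l j hl (sub_left_injective (h2.trans hjp.symm))
    · simp

lemma sum_uv (v : Fin d → ℤ) (c : ℝ) :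
    ∑ p, (if v = uv p then c else 0) = if vnorm v = 1 then c else 0 := by
  by_cases h : vnorm v = 1
  · rw [if_pos h]
    obtain ⟨p, hp⟩ := (vnorm_eq_one v).1 h
    rw [Finset.sum_eq_single p]
    · rw [if_pos hp]
    · intro p' _ hp'
      refine if_neg fun h' => hp' (uv_injective (h'.symm.trans hp))
    · simp
  · rw [if_neg h]
    refine Finset.sum_eq_zero fun p _ => if_neg fun hp => h ((vnorm_eq_one v).2 ⟨p, hp⟩)

lemma vnorm_sub_comm (v w : Fin d → ℤ) : vnorm (v - w) = vnorm (w - v) := by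
  unfold vnorm
  congr 1
  refine Finset.sum_congr rfl fun j _ => ?_
  simp only [Pi.sub_apply]; push_cast; ring

lemma gen_diff (g : BF (Conf d k)) (x : Conf d k) (hx : x ∈ SSet d k) :
    LrwOp d k g x - LexcOp d k g x =
      ∑ i : Fin k, ∑ j : Fin k, if i < j ∧ vnorm (x i - x j) = 1 then DD g x i j else 0 := by
  have h1 : ∑ q, (g (x + cu q) - g x) -
      ∑ q, (if x + cu q ∈ SSet d k then g (x + cu q) - g x else 0) =
      ∑ i : Fin k, ∑ j : Fin k, if j ≠ i ∧ vnorm (x j - x i) = 1 then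
        g (Function.update x i (x j)) - g x else 0 := by
    rw [← Finset.sum_sub_distrib, Fintype.sum_prod_type]
    refine Finset.sum_congr rfl fun i _ => ?_
    calc _ = ∑ p, ∑ j, (if j ≠ i ∧ x j - x i = uv p then
              g (Function.update x i (x j)) - g x else 0) := by
          refine Finset.sum_congr rfl fun p _ => ?_
          rw [← step_sum x hx i p (fun y => g y - g x)]
          split_ifs <;> simp
      _ = _ := by
          rw [Finset.sum_comm]
          refine Finset.sum_congr rfl fun j _ => ?_
          by_cases hij : j = i
          · simp [hij]
          · simp only [ne_eq, hij, not_false_eq_true, true_and]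
            exact sum_uv _ _
  have h2 : ∑ i : Fin k, ∑ j : Fin k, (if j ≠ i ∧ vnorm (x j - x i) = 1 then
        g (Function.update x i (x j)) - g x else 0) =
      ∑ i : Fin k, ∑ j : Fin k, (if i < j ∧ vnorm (x i - x j) = 1 then
        (g (Function.update x i (x j)) - g x) + (g (Function.update x j (x i)) - g x) else 0) := by
    have h3 : ∀ i j : Fin k, (if j ≠ i ∧ vnorm (x j - x i) = 1 then
        g (Function.update x i (x j)) - g x else 0) =
        (if i < j ∧ vnorm (x i - x j) = 1 then g (Function.update x i (x j)) - g x else 0) +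
        (if j < i ∧ vnorm (x j - x i) = 1 then g (Function.update x i (x j)) - g x else 0) := by
      intro i j
      rw [vnorm_sub_comm (x i) (x j)]
      rcases lt_trichotomy i j with h | h | h
      · simp [h, h.ne', h.not_gt]
      · simp [h]
      · simp [h, h.ne, h.not_gt]
    simp only [h3, Finset.sum_add_distrib]
    rw [Finset.sum_comm (f := fun i j => if j < i ∧ vnorm (x j - x i) = 1 then
      g (Function.update x i (x j)) - g x else 0)]
    rw [← Finset.sum_add_distrib]
    refine Finset.sum_congr rfl fun i _ => ?_
    rw [← Finset.sum_add_distrib]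
    refine Finset.sum_congr rfl fun j _ => ?_
    split_ifs <;> simp
  rw [LrwOp_apply, LexcOp_apply, ← sub_sub, h1, h2, ← Finset.sum_sub_distrib]
  refine Finset.sum_congr rfl fun i _ => ?_
  rw [← Finset.sum_sub_distrib]
  refine Finset.sum_congr rfl fun j _ => ?_
  simp only [hx, and_true]
  split_ifs
  · unfold DD; ring
  · simp

end Generators

section Generic

variable {E : Type*} [NormedAddCommGroup E] [NormedSpace ℝ E] [CompleteSpace E]

lemma semi_grad2' [Nontrivial E] {ι : Type*} [Fintype ι] [DecidableEq ι] (V : ι → E →L[ℝ] E)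
    (hV : ∀ i, ‖V i‖ ≤ 1) (hc : ∀ i j f, V i (V j f) = V j (V i f)) (a b : ι) (hab : a ≠ b)
    (u : ℝ) (hu : 0 ≤ u) (f : E) (C : ℝ) (hf : ‖f‖ ≤ C) :
    ‖semi u (∑ i, (V i - 1)) ((V a - 1) ((V b - 1) f))‖ ≤ 5 / (1 + u) * C := by
  have hc' : ∀ i j, Commute (V i) (V j) := fun i j => ContinuousLinearMap.ext fun f => hc i j f
  have hc1 : ∀ i j, Commute (V i - 1) (V j - 1) := fun i j =>
    ((hc' i j).sub_right (Commute.one_right _)).sub_left (Commute.one_left _)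
  have hc2 : ∀ i, Commute (V i - 1) (NormedSpace.exp (u • ∑ i, (V i - 1))) := fun i =>
    ((Commute.sum_right _ _ _ fun j _ => hc1 i j).smul_right u).exp_right
  have hc3 := (hc2 a).mul_left (hc2 b)
  have h := semi_grad2 V hV hc a b hab u hu f C hf
  have e := congrArg (fun T : E →L[ℝ] E => T f) hc3.eq
  have e' : (V a - 1) ((V b - 1) (semi u (∑ i, (V i - 1)) f)) =
    semi u (∑ i, (V i - 1)) ((V a - 1) ((V b - 1) f)) := e
  rw [← e']; exact h

lemma semi_smul (c u : ℝ) (L : E →L[ℝ] E) : semi u (c • L) = semi (u * c) L := by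
  rw [semi, semi, smul_smul]

end Generic

section Bounds

variable {d k : ℕ}

lemma Vop_apply (q : Fin k × Fin d × Bool) (f : BF (Conf d k)) (x : Conf d k) :
    Vop q f x = f (x + cu q) := rfl

lemma Vop_comm (q r : Fin k × Fin d × Bool) (f : BF (Conf d k)) :
    Vop q (Vop r f) = Vop r (Vop q f) := by
  ext x
  simp only [Vop_apply, add_right_comm]

instance : Nontrivial (BF (Conf d k)) := by
  refine ⟨⟨0, 1, fun h => ?_⟩⟩
  have := congrArg (fun f : BF (Conf d k) => f 0) h
  simp at this

instance : Nontrivial (BF (Fin d → ℤ)) := by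
  refine ⟨⟨0, 1, fun h => ?_⟩⟩
  have := congrArg (fun f : BF (Fin d → ℤ) => f 0) h
  simp at this

lemma DD_bound (φ : BF (Conf d k)) (hφ : ‖φ‖ ≤ 1) (u : ℝ) (hu : 0 ≤ u) (x : Conf d k)
    (i j : Fin k) (hij : i ≠ j) (hadj : vnorm (x i - x j) = 1) :
    |DD (semi u (LrwOp d k) φ) x i j| ≤ 5 / (1 + u) := by
  obtain ⟨p, hp⟩ := (vnorm_eq_one _).1 hadj
  have hp' : x i = x j + uv p := by rw [← hp]; abel
  have h := semi_grad2 (Vop (d := d) (k := k)) (fun q => compOp_norm _) Vop_comm (i, p) (j, p)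
    (by simp [hij]) u hu φ 1 hφ
  have h2 := (BoundedContinuousFunction.norm_coe_le_norm _ (Function.update x i (x j))).trans h
  change ‖(Vop (i, p) - 1) ((Vop (j, p) - 1) (semi u (LrwOp d k) φ)) _‖ ≤ _ at h2
  rw [mul_one] at h2
  set g := semi u (LrwOp d k) φ
  have e1 : Function.update x i (x j) + cu (i, p) = x := by
    rw [add_cu, Function.update_self, ← hp', Function.update_idem, Function.update_eq_self]
  have e2 : Function.update x i (x j) + cu (j, p) = cswap i j x := by
    rw [add_cu, cswap_eq, Function.update_of_ne hij.symm, ← hp']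
  have e3 : x + cu (j, p) = Function.update x j (x i) := by
    rw [add_cu, ← hp']
  have e4 : (Vop (i, p) - 1) ((Vop (j, p) - 1) g) (Function.update x i (x j)) = DD g x i j := by
    have : (Vop (i, p) - 1) ((Vop (j, p) - 1) g) (Function.update x i (x j)) =
      (g (Function.update x i (x j) + cu (i, p) + cu (j, p)) -
        g (Function.update x i (x j) + cu (i, p))) -
      (g (Function.update x i (x j) + cu (j, p)) - g (Function.update x i (x j))) := rfl
    rw [this, e1, e2, e3, DD]; ring
  rw [e4] at h2
  exact h2

lemma semi_pos (s : ℝ) (hs : 0 ≤ s) (f : BF (Conf d k)) (hf : ∀ x ∈ SSet d k, 0 ≤ f x) :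
    ∀ x ∈ SSet d k, 0 ≤ semi s (LexcOp d k) f x := by
  refine cone_invariant {f : BF (Conf d k) | ∀ x ∈ SSet d k, 0 ≤ f x} ?_ ?_ ?_ ?_ (LexcOp d k)
    (∑ q : Fin k × Fin d × Bool, (1 : ℝ) + ∑ i : Fin k, ∑ j : Fin k, (1 : ℝ)) ?_ s hs f hf
  · simp only [Set.ofPred_forall]
    exact isClosed_iInter fun x => isClosed_iInter fun _ =>
      isClosed_le continuous_const (BoundedContinuousFunction.evalCLM ℝ x).continuous
  · intro x _; simp
  · intro f hf g hg x hx
    exact add_nonneg (hf x hx) (hg x hx)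
  · intro c hc f hf x hx
    exact mul_nonneg hc (hf x hx)
  · intro f hf x hx
    have e : (LexcOp d k f + (∑ q : Fin k × Fin d × Bool, (1 : ℝ) +
        ∑ i : Fin k, ∑ j : Fin k, (1 : ℝ)) • f) x =
        ∑ q, ((if x + cu q ∈ SSet d k then f (x + cu q) - f x else 0) + f x) +
        ∑ i : Fin k, ∑ j : Fin k,
        ((if i < j ∧ vnorm (x i - x j) = 1 ∧ x ∈ SSet d k then f (cswap i j x) - f x else 0)
          + f x) := by
      rw [BoundedContinuousFunction.add_apply, LexcOp_apply, BoundedContinuousFunction.smul_apply,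
        smul_eq_mul, add_mul]
      simp only [Finset.sum_add_distrib, Finset.sum_mul, one_mul]
      ring
    rw [e]
    refine add_nonneg (Finset.sum_nonneg fun q _ => ?_)
      (Finset.sum_nonneg fun i _ => Finset.sum_nonneg fun j _ => ?_)
    · split_ifs with h
      · have := hf _ h; linarith
      · have := hf _ hx; linarith
    · split_ifs with h
      · have := hf _ (cswap_mem x i j hx); linarith
      · have := hf _ hx; linarith

/-- Shifts on `ℤ^d`. -/
def Wop (p : Fin d × Bool) : BF (Fin d → ℤ) →L[ℝ] BF (Fin d → ℤ) := compOp (fun v => v + uv p)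

lemma Wop_comm (q r : Fin d × Bool) (f : BF (Fin d → ℤ)) :
    Wop q (Wop r f) = Wop r (Wop q f) := by
  ext x
  change f (x + uv q + uv r) = f (x + uv r + uv q)
  rw [add_right_comm]

/-- The discrete Laplacian. -/
def DelOp (d : ℕ) : BF (Fin d → ℤ) →L[ℝ] BF (Fin d → ℤ) := ∑ p, (Wop p - 1)

lemma DelOp_apply (f : BF (Fin d → ℤ)) (v : Fin d → ℤ) :
    DelOp d f v = ∑ p, (f (v + uv p) - f v) := by
  simp [DelOp, Wop]

/-- Pull back along the difference of two particles. -/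
def piOp (a b : Fin k) : BF (Fin d → ℤ) →L[ℝ] BF (Conf d k) := compOp (fun x => x a - x b)

lemma uv_neg (m : Fin d) (b : Bool) : uv (m, !b) = -uv (m, b) := by
  cases b <;> simp [uv, Pi.single_neg]

lemma piOp_intertwine (a b : Fin k) (hab : a ≠ b) (f : BF (Fin d → ℤ)) :
    LrwOp d k (piOp a b f) = piOp a b (((2 : ℝ) • DelOp d) f) := by
  ext x
  rw [LrwOp_apply]
  change ∑ q : Fin k × Fin d × Bool,
    (f ((x + cu q) a - (x + cu q) b) - f (x a - x b)) = 2 * DelOp d f (x a - x b)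
  rw [DelOp_apply, Fintype.sum_prod_type]
  have hrest : ∑ i ∈ (Finset.univ.erase a).erase b, ∑ p : Fin d × Bool,
      (f ((x + cu (i, p)) a - (x + cu (i, p)) b) - f (x a - x b)) = 0 := by
    refine Finset.sum_eq_zero fun i hi => Finset.sum_eq_zero fun p _ => ?_
    simp only [Finset.mem_erase] at hi
    simp only [add_cu, Function.update_of_ne hi.1.symm, Function.update_of_ne hi.2.1.symm, sub_self]
  have e1 : ∑ p : Fin d × Bool, (f ((x + cu (a, p)) a - (x + cu (a, p)) b) - f (x a - x b)) =
      ∑ p : Fin d × Bool, (f (x a - x b + uv p) - f (x a - x b)) := by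
    refine Finset.sum_congr rfl fun p _ => ?_
    simp only [add_cu, Function.update_self, Function.update_of_ne hab.symm]
    rw [add_sub_right_comm]
  have e2 : ∑ p : Fin d × Bool, (f ((x + cu (b, p)) a - (x + cu (b, p)) b) - f (x a - x b)) =
      ∑ p : Fin d × Bool, (f (x a - x b + uv p) - f (x a - x b)) := by
    rw [Fintype.sum_prod_type, Fintype.sum_prod_type]
    refine Finset.sum_congr rfl fun m _ => ?_
    have e3 : ∀ c : Bool, (x + cu (b, m, c)) a - (x + cu (b, m, c)) b =
        x a - x b + uv (m, !c) := by
      intro c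
      rw [uv_neg]
      simp only [add_cu, Function.update_self, Function.update_of_ne hab]
      abel
    simp only [e3, Fintype.sum_bool, Bool.not_true, Bool.not_false]
    ring
  rw [← Finset.add_sum_erase Finset.univ _ (Finset.mem_univ a),
    ← Finset.add_sum_erase (Finset.univ.erase a) _
      (Finset.mem_erase.2 ⟨hab.symm, Finset.mem_univ b⟩), hrest, e1, e2]
  ring

/-- The reference function `1{|v_0| ≤ 1, |v_1| ≤ 1}`. -/
def refFn (m0 m1 : Fin d) : BF (Fin d → ℤ) :=
  BoundedContinuousFunction.ofNormedAddCommGroupDiscrete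
    (fun v => if |v m0| ≤ 1 ∧ |v m1| ≤ 1 then (1 : ℝ) else 0) 1
    (fun v => by split_ifs <;> simp)

lemma refFn_apply (m0 m1 : Fin d) (v : Fin d → ℤ) :
    refFn m0 m1 v = if |v m0| ≤ 1 ∧ |v m1| ≤ 1 then (1 : ℝ) else 0 := rfl

/-- A discrete primitive of `1{|n| ≤ 1}`. -/
def primFn (n : ℤ) : ℝ := ((max 0 (min (n + 1) 3) : ℤ) : ℝ)

lemma primFn_le (n : ℤ) : |primFn n| ≤ 3 := by
  unfold primFn
  rw [abs_of_nonneg (by exact_mod_cast le_max_left _ _)]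
  have : max 0 (min (n + 1) 3) ≤ 3 := by omega
  exact_mod_cast this

lemma primFn_diff (n : ℤ) : primFn (n + 1) - primFn n = if |n| ≤ 1 then 1 else 0 := by
  unfold primFn
  rw [← Int.cast_sub]
  split_ifs with h
  · rw [abs_le] at h
    have : max 0 (min (n + 1 + 1) 3) - max 0 (min (n + 1) 3) = 1 := by omega
    rw [this]; simp
  · rw [abs_le] at h
    have : max 0 (min (n + 1 + 1) 3) - max 0 (min (n + 1) 3) = 0 := by omega
    rw [this]; simp

lemma primFn_mul_le (m n : ℤ) : ‖primFn m * primFn n‖ ≤ 9 := by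
  rw [norm_mul]
  have := primFn_le m
  have := primFn_le n
  rw [Real.norm_eq_abs, Real.norm_eq_abs]
  nlinarith [abs_nonneg (primFn m), abs_nonneg (primFn n)]

/-- Two-dimensional primitive. -/
def prim2 (m0 m1 : Fin d) : BF (Fin d → ℤ) :=
  BoundedContinuousFunction.ofNormedAddCommGroupDiscrete
    (fun v => primFn (v m0) * primFn (v m1)) 9 (fun v => primFn_mul_le _ _)

lemma prim2_norm (m0 m1 : Fin d) : ‖prim2 m0 m1‖ ≤ 9 :=
  (BoundedContinuousFunction.norm_le (by norm_num)).2 fun v => primFn_mul_le _ _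

lemma refFn_eq (m0 m1 : Fin d) (h : m0 ≠ m1) :
    (Wop (m0, true) - 1) ((Wop (m1, true) - 1) (prim2 m0 m1)) = refFn m0 m1 := by
  ext v
  have : (Wop (m0, true) - 1) ((Wop (m1, true) - 1) (prim2 m0 m1)) v =
    (primFn ((v + uv (m0, true) + uv (m1, true)) m0) *
      primFn ((v + uv (m0, true) + uv (m1, true)) m1) -
      primFn ((v + uv (m0, true)) m0) * primFn ((v + uv (m0, true)) m1)) -
    (primFn ((v + uv (m1, true)) m0) * primFn ((v + uv (m1, true)) m1) -
      primFn (v m0) * primFn (v m1)) := rfl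
  rw [this, refFn_apply]
  have e0 := primFn_diff (v m0)
  have e1 := primFn_diff (v m1)
  have : (if |v m0| ≤ 1 ∧ |v m1| ≤ 1 then (1 : ℝ) else 0) =
      (if |v m0| ≤ 1 then 1 else 0) * (if |v m1| ≤ 1 then 1 else 0) := by
    by_cases h0 : |v m0| ≤ 1 <;> by_cases h1 : |v m1| ≤ 1 <;> simp [h0, h1]
  rw [this, ← e0, ← e1]
  simp [uv, h, h.symm]
  ring

lemma semi_refFn (m0 m1 : Fin d) (h : m0 ≠ m1) (u : ℝ) (hu : 0 ≤ u) (v : Fin d → ℤ) :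
    semi u (DelOp d) (refFn m0 m1) v ≤ 45 / (1 + u) := by
  rw [← refFn_eq m0 m1 h]
  have h1 := semi_grad2' (Wop (d := d)) (fun q => compOp_norm _) Wop_comm (m0, true) (m1, true)
    (by simp [h]) u hu (prim2 m0 m1) 9 (prim2_norm m0 m1)
  have h2 := (BoundedContinuousFunction.norm_coe_le_norm _ v).trans h1
  refine (le_abs_self _).trans (h2.trans (le_of_eq ?_))
  ring

end Bounds

section Unimodal

variable {d k : ℕ}

/-- Coordinatewise symmetric and unimodal functions. -/
def Unim (h : (Fin d → ℤ) → ℝ) : Prop :=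
  (∀ m v, h (Function.update v m (-v m)) = h v) ∧
    ∀ (m : Fin d) (v : Fin d → ℤ), 0 ≤ v m → h (v + Pi.single m 1) ≤ h v

lemma Unim.sum {ι : Type*} (s : Finset ι) (f : ι → (Fin d → ℤ) → ℝ) (hf : ∀ i, Unim (f i)) :
    Unim (fun v => ∑ i ∈ s, f i v) :=
  ⟨fun m v => Finset.sum_congr rfl fun i _ => (hf i).1 m v,
    fun m v hv => Finset.sum_le_sum fun i _ => (hf i).2 m v hv⟩

lemma Unim.step (h : (Fin d → ℤ) → ℝ) (hh : Unim h) (n : Fin d) :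
    Unim (fun v => h (v + Pi.single n 1) + h (v - Pi.single n 1) + h v) := by
  constructor
  · intro m v
    beta_reduce
    by_cases hmn : n = m
    · subst hmn
      have e1 : Function.update v n (-v n) + Pi.single n 1 =
          Function.update (v - Pi.single n 1) n (-(v - Pi.single n 1 : Fin d → ℤ) n) := by
        funext l
        by_cases hl : l = n
        · subst hl; simp; ring
        · simp [hl]
      have e2 : Function.update v n (-v n) - Pi.single n 1 =
          Function.update (v + Pi.single n 1) n (-(v + Pi.single n 1 : Fin d → ℤ) n) := by
        funext l
        by_cases hl : l = n
        · subst hl; simp; ring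
        · simp [hl]
      rw [e1, e2, hh.1, hh.1, hh.1]; ring
    · have e1 : Function.update v m (-v m) + Pi.single n 1 =
          Function.update (v + Pi.single n 1) m (-(v + Pi.single n 1 : Fin d → ℤ) m) := by
        funext l
        by_cases hl : l = m
        · subst hl; simp [Ne.symm hmn]
        · simp [hl]
      have e2 : Function.update v m (-v m) - Pi.single n 1 =
          Function.update (v - Pi.single n 1) m (-(v - Pi.single n 1 : Fin d → ℤ) m) := by
        funext l
        by_cases hl : l = m
        · subst hl; simp [Ne.symm hmn]
        · simp [hl]
      rw [e1, e2, hh.1, hh.1, hh.1]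
  · intro m v hv
    beta_reduce
    by_cases hmn : n = m
    · subst hmn
      have key : h (v + Pi.single n 1 + Pi.single n 1) ≤ h (v - Pi.single n 1) := by
        have h1 := hh.2 n (v + Pi.single n 1) (by simp; omega)
        refine h1.trans ?_
        rcases hv.eq_or_lt with h0 | h0
        · have e1 : v + Pi.single n 1 =
              Function.update (v - Pi.single n 1) n (-(v - Pi.single n 1 : Fin d → ℤ) n) := by
            funext l
            by_cases hl : l = n
            · subst hl; simp [← h0]
            · simp [hl]
          rw [e1, hh.1]
        · have h2 := hh.2 n (v - Pi.single n 1) (by simp; omega)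
          rw [sub_add_cancel] at h2
          exact (hh.2 n v hv).trans h2
      rw [add_sub_cancel_right]
      linarith
    · have h1 := hh.2 m (v + Pi.single n 1) (by simp [Ne.symm hmn, hv])
      have h2 := hh.2 m (v - Pi.single n 1) (by simp [Ne.symm hmn, hv])
      have h3 := hh.2 m v hv
      rw [add_right_comm] at h1
      rw [sub_add_eq_add_sub] at h2
      linarith

lemma semi_unim (s : ℝ) (hs : 0 ≤ s) (f : BF (Fin d → ℤ)) (hf : Unim f) :
    Unim (semi s (DelOp d) f) := by
  refine cone_invariant {f : BF (Fin d → ℤ) | Unim f} ?_ ?_ ?_ ?_ (DelOp d)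
    (∑ m : Fin d, (3 : ℝ)) ?_ s hs f hf
  · have : {f : BF (Fin d → ℤ) | Unim f} =
        (⋂ m, ⋂ v, {f : BF (Fin d → ℤ) | f (Function.update v m (-v m)) = f v}) ∩
        (⋂ m, ⋂ v, ⋂ (_ : 0 ≤ v m), {f : BF (Fin d → ℤ) | f (v + Pi.single m 1) ≤ f v}) := by
      ext f; simp [Unim]
    rw [this]
    refine IsClosed.inter ?_ ?_
    · exact isClosed_iInter fun m => isClosed_iInter fun v =>
        isClosed_eq (BoundedContinuousFunction.evalCLM ℝ _).continuous
          (BoundedContinuousFunction.evalCLM ℝ v).continuous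
    · exact isClosed_iInter fun m => isClosed_iInter fun v => isClosed_iInter fun _ =>
        isClosed_le (BoundedContinuousFunction.evalCLM ℝ _).continuous
          (BoundedContinuousFunction.evalCLM ℝ v).continuous
  · exact ⟨fun _ _ => rfl, fun _ _ _ => le_rfl⟩
  · intro f hf g hg
    exact ⟨fun m v => congrArg₂ (· + ·) (hf.1 m v) (hg.1 m v),
      fun m v hv => add_le_add (hf.2 m v hv) (hg.2 m v hv)⟩
  · intro c hc f hf
    exact ⟨fun m v => congrArg (c * ·) (hf.1 m v),
      fun m v hv => mul_le_mul_of_nonneg_left (hf.2 m v hv) hc⟩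
  · intro f hf
    have e : ⇑(DelOp d f + (∑ m : Fin d, (3 : ℝ)) • f) =
        fun v => ∑ m : Fin d, (f (v + Pi.single m 1) + f (v - Pi.single m 1) + f v) := by
      funext v
      rw [BoundedContinuousFunction.add_apply, DelOp_apply, BoundedContinuousFunction.smul_apply,
        smul_eq_mul, Finset.sum_mul, Fintype.sum_prod_type, ← Finset.sum_add_distrib]
      refine Finset.sum_congr rfl fun m _ => ?_
      have e1 : uv (m, false) = -Pi.single m (1 : ℤ) := by
        simp [uv, Pi.single_neg]
      have e2 : uv (m, true) = Pi.single m (1 : ℤ) := by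
        simp [uv]
      rw [Fintype.sum_bool, e1, e2, ← sub_eq_add_neg]
      ring
    change Unim _
    rw [e]
    exact Unim.sum _ _ fun m => Unim.step _ hf m

lemma refFn_unim (m0 m1 : Fin d) : Unim (refFn m0 m1) := by
  have key : ∀ (m n : Fin d) (v : Fin d → ℤ), |Function.update v m (-v m) n| = |v n| := by
    intro m n v
    by_cases h : n = m
    · subst h; simp
    · simp [h]
  have key2 : ∀ (m n : Fin d) (v : Fin d → ℤ), 0 ≤ v m →
      |(v + Pi.single (M := fun _ => ℤ) m 1) n| ≤ 1 → |v n| ≤ 1 := by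
    intro m n v hv h1
    by_cases h : n = m
    · subst h
      simp only [Pi.add_apply, Pi.single_eq_same] at h1
      rw [abs_le] at h1 ⊢
      omega
    · simpa [h] using h1
  constructor
  · intro m v
    simp only [refFn_apply, key]
  · intro m v hv
    simp only [refFn_apply]
    by_cases h : |(v + Pi.single (M := fun _ => ℤ) m 1) m0| ≤ 1 ∧
      |(v + Pi.single (M := fun _ => ℤ) m 1) m1| ≤ 1
    · rw [if_pos h, if_pos ⟨key2 m m0 v hv h.1, key2 m m1 v hv h.2⟩]
    · rw [if_neg h]
      split_ifs <;> simp

lemma Unim.uv_le (h : (Fin d → ℤ) → ℝ) (hh : Unim h) (p : Fin d × Bool) : h (uv p) ≤ h 0 := by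
  obtain ⟨m, b⟩ := p
  have h1 := hh.2 m 0 le_rfl
  rw [zero_add] at h1
  cases b
  · have e : uv (m, false) = Function.update (Pi.single m (1 : ℤ)) m
        (-(Pi.single m (1 : ℤ) : Fin d → ℤ) m) := by
      funext l
      by_cases hl : l = m
      · subst hl; simp [uv]
      · simp [uv, hl]
    rw [e, hh.1]; exact h1
  · exact h1

lemma refFn_nonneg (m0 m1 : Fin d) (v : Fin d → ℤ) : 0 ≤ refFn m0 m1 v := by
  rw [refFn_apply]; split_ifs <;> simp

lemma refFn_unit (m0 m1 : Fin d) (v : Fin d → ℤ) (hv : vnorm v = 1) : refFn m0 m1 v = 1 := by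
  obtain ⟨p, rfl⟩ := (vnorm_eq_one _).1 hv
  have : ∀ m, |uv p m| ≤ 1 := by
    intro m
    obtain ⟨n, b⟩ := p
    by_cases h : m = n
    · subst h; cases b <;> simp [uv]
    · simp [uv, h]
  rw [refFn_apply, if_pos ⟨this _, this _⟩]

lemma DD_pi_nonneg (h : BF (Fin d → ℤ)) (hh : Unim h) (a b i j : Fin k) (hab : a ≠ b)
    (hij : i ≠ j) (x : Conf d k) (hadj : vnorm (x i - x j) = 1) :
    0 ≤ DD (piOp a b h) x i j := by
  change 0 ≤ h (Function.update x i (x j) a - Function.update x i (x j) b) +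
    h (Function.update x j (x i) a - Function.update x j (x i) b) - h (x a - x b) -
    h (cswap i j x a - cswap i j x b)
  have hu : ∀ v, vnorm v = 1 → h v ≤ h 0 := by
    intro v hv
    obtain ⟨p, rfl⟩ := (vnorm_eq_one _).1 hv
    exact hh.uv_le _ p
  have h1 := hu _ hadj
  have h2 := hu _ ((vnorm_sub_comm _ _).trans hadj)
  rw [cswap_eq]
  by_cases hai : a = i
  · subst hai
    by_cases hbj : b = j
    · subst hbj
      simp only [Function.update_self, Function.update_of_ne hij, Function.update_of_ne hij.symm,
        sub_self]
      linarith
    · simp [Function.update_of_ne hij, Function.update_of_ne hab.symm, hbj]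
  · by_cases haj : a = j
    · subst haj
      by_cases hbi : b = i
      · subst hbi
        simp only [Function.update_self, Function.update_of_ne hij,
          Function.update_of_ne hij.symm, sub_self]
        linarith
      · simp [Function.update_of_ne hai, Function.update_of_ne hab.symm, hbi]
    · by_cases hbi : b = i
      · subst hbi
        simp [Function.update_of_ne hai, haj, hij]
      · by_cases hbj : b = j
        · subst hbj
          simp [hai, haj, hbi]
        · simp [hai, haj, hbi, hbj]

lemma semi_pi (a b : Fin k) (hab : a ≠ b) (s : ℝ) (h : BF (Fin d → ℤ)) :
    semi s (LrwOp d k) (piOp a b h) = piOp a b (semi (s * 2) (DelOp d) h) := by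
  rw [← semi_smul]
  exact semi_intertwine s _ _ (piOp a b) (piOp_intertwine a b hab) h

lemma liggett (m0 m1 : Fin d) (hm : m0 ≠ m1) (a b : Fin k) (hab : a ≠ b) (x : Conf d k)
    (hx : x ∈ SSet d k) (s : ℝ) (hs : 0 ≤ s) :
    semi s (LexcOp d k) (piOp a b (refFn m0 m1)) x ≤ 45 / (1 + s) := by
  have hd := duhamel_deriv (LexcOp d k) (LrwOp d k) (piOp a b (refFn m0 m1))
    (BoundedContinuousFunction.evalCLM ℝ x) s
  have hanti : AntitoneOn (fun r => BoundedContinuousFunction.evalCLM ℝ x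
      (semi r (LexcOp d k) (semi (s - r) (LrwOp d k) (piOp a b (refFn m0 m1))))) (Set.Icc 0 s) := by
    refine antitoneOn_of_deriv_nonpos (convex_Icc 0 s)
      (fun r _ => (hd r).continuousAt.continuousWithinAt)
      (fun r _ => (hd r).differentiableAt.differentiableWithinAt) ?_
    intro r hr
    rw [interior_Icc] at hr
    rw [(hd r).deriv]
    set g := semi (s - r) (LrwOp d k) (piOp a b (refFn m0 m1)) with hg
    have hpos := semi_pos r hr.1.le ((LrwOp d k - LexcOp d k) g) ?_ x hx
    · have e : (LexcOp d k - LrwOp d k) g = -((LrwOp d k - LexcOp d k) g) := by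
        ext y; simp
      rw [e, map_neg, map_neg]
      exact neg_nonpos.2 hpos
    · intro y hy
      change 0 ≤ LrwOp d k g y - LexcOp d k g y
      rw [gen_diff g y hy]
      refine Finset.sum_nonneg fun i _ => Finset.sum_nonneg fun j _ => ?_
      split_ifs with hc
      · rw [hg, semi_pi a b hab]
        have hsr : 0 ≤ (s - r) * 2 := by have := hr.2; linarith
        exact DD_pi_nonneg _ (semi_unim _ hsr _ (refFn_unim m0 m1)) a b i j hab hc.1.ne y hc.2
      · exact le_rfl
  have h1 := hanti (Set.left_mem_Icc.2 hs) (Set.right_mem_Icc.2 hs) hs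
  simp only [sub_self, sub_zero, semi_zero] at h1
  refine h1.trans ?_
  rw [semi_pi a b hab]
  change semi (s * 2) (DelOp d) (refFn m0 m1) (x a - x b) ≤ _
  refine (semi_refFn m0 m1 hm (s * 2) (by positivity) _).trans ?_
  gcongr
  linarith

end Unimodal

section Main

variable {d k : ℕ}

lemma deriv_bound (m0 m1 : Fin d) (hm : m0 ≠ m1) (φ : BF (Conf d k)) (hφ : ‖φ‖ ≤ 1)
    (x : Conf d k) (hx : x ∈ SSet d k) (s u : ℝ) (hs : 0 ≤ s) (hu : 0 ≤ u) :
    |semi s (LexcOp d k) ((LexcOp d k - LrwOp d k) (semi u (LrwOp d k) φ)) x| ≤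
      (k : ℝ) * k * 225 / ((1 + s) * (1 + u)) := by
  set g := semi u (LrwOp d k) φ with hg
  set A := (LexcOp d k - LrwOp d k) g with hA
  set H : BF (Conf d k) := ∑ i : Fin k, ∑ j : Fin k,
    if i < j then (5 / (1 + u)) • piOp i j (refFn m0 m1) else 0 with hH
  have hAH : ∀ y ∈ SSet d k, |A y| ≤ H y := by
    intro y hy
    have e : A y = -(LrwOp d k g y - LexcOp d k g y) := by
      rw [neg_sub]; rfl
    rw [e, abs_neg, gen_diff g y hy, hH, bf_sum_apply]
    refine (Finset.abs_sum_le_sum_abs _ _).trans (Finset.sum_le_sum fun i _ => ?_)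
    rw [bf_sum_apply]
    refine (Finset.abs_sum_le_sum_abs _ _).trans (Finset.sum_le_sum fun j _ => ?_)
    by_cases hij : i < j
    · have e2 : (if i < j then (5 / (1 + u)) • piOp i j (refFn m0 m1) else 0 : BF (Conf d k)) y =
          5 / (1 + u) * refFn m0 m1 (y i - y j) := by
        rw [if_pos hij]; rfl
      rw [e2]
      by_cases hadj : vnorm (y i - y j) = 1
      · rw [if_pos ⟨hij, hadj⟩, refFn_unit m0 m1 _ hadj, mul_one]
        exact DD_bound φ hφ u hu y i j hij.ne hadj
      · rw [if_neg (fun h => hadj h.2), abs_zero]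
        exact mul_nonneg (by positivity) (refFn_nonneg _ _ _)
    · simp [hij]
  have hHx : semi s (LexcOp d k) H x ≤ (k : ℝ) * k * 225 / ((1 + s) * (1 + u)) := by
    have e : semi s (LexcOp d k) H x = ∑ i : Fin k, ∑ j : Fin k,
        if i < j then 5 / (1 + u) * semi s (LexcOp d k) (piOp i j (refFn m0 m1)) x else 0 := by
      rw [hH, map_sum, bf_sum_apply]
      refine Finset.sum_congr rfl fun i _ => ?_
      rw [map_sum, bf_sum_apply]
      refine Finset.sum_congr rfl fun j _ => ?_
      split_ifs
      · rw [map_smul]; rfl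
      · rw [map_zero]; rfl
    rw [e]
    calc _ ≤ ∑ i : Fin k, ∑ j : Fin k, 5 / (1 + u) * (45 / (1 + s)) := by
          refine Finset.sum_le_sum fun i _ => Finset.sum_le_sum fun j _ => ?_
          split_ifs with hij
          · exact mul_le_mul_of_nonneg_left (liggett m0 m1 hm i j hij.ne x hx s hs) (by positivity)
          · positivity
      _ = _ := by
          simp only [Finset.sum_const, Finset.card_univ, Fintype.card_fin, nsmul_eq_mul]
          field_simp
          ring
  have h1 := semi_pos s hs (H - A) (fun y hy => sub_nonneg.2 ((le_abs_self _).trans (hAH y hy))) x hx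
  have h2 := semi_pos s hs (H + A) (fun y hy => by
    have := (neg_abs_le _).trans' (neg_le_neg (hAH y hy))
    change 0 ≤ H y + A y
    linarith) x hx
  rw [map_sub, BoundedContinuousFunction.sub_apply] at h1
  rw [map_add, BoundedContinuousFunction.add_apply] at h2
  rw [abs_le]
  constructor <;> linarith

lemma main_est (m0 m1 : Fin d) (hm : m0 ≠ m1) (φ : BF (Conf d k)) (hφ : ‖φ‖ ≤ 1)
    (x : Conf d k) (hx : x ∈ SSet d k) (t : ℝ) (ht : 0 ≤ t) :
    |semi t (LrwOp d k) φ x - semi t (LexcOp d k) φ x| ≤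
      (k : ℝ) * k * 225 / (2 + t) * (2 * Real.log (1 + t)) := by
  have hd := duhamel_deriv (LexcOp d k) (LrwOp d k) φ (BoundedContinuousFunction.evalCLM ℝ x) t
  set F : ℝ → ℝ := fun s => BoundedContinuousFunction.evalCLM ℝ x
      (semi s (LexcOp d k) (semi (t - s) (LrwOp d k) φ)) with hF
  set K : ℝ := (k : ℝ) * k * 225 with hK
  have hB : ∀ s ∈ Set.Icc (0 : ℝ) t, HasDerivAt
      (fun s => K / (2 + t) * (Real.log (1 + s) - Real.log (1 + t - s) + Real.log (1 + t)))
      (K / ((1 + s) * (1 + (t - s)))) s := by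
    intro s hs
    have p1 : 0 < 1 + s := by have := hs.1; linarith
    have p2 : 0 < 1 + t - s := by have := hs.2; linarith
    have p3 : 0 < 1 + (t - s) := by linarith
    have a1 := ((hasDerivAt_id s).const_add 1).log p1.ne'
    have a2 := ((hasDerivAt_id s).const_sub (1 + t)).log p2.ne'
    have a3 := ((a1.sub a2).add_const (Real.log (1 + t))).const_mul (K / (2 + t))
    refine a3.congr_deriv ?_
    have p4 : 1 + t - s = 1 + (t - s) := by ring
    simp only [id, p4]
    have p5 : 0 < 2 + t := by linarith
    field_simp
    ring
  have key := image_norm_le_of_norm_deriv_right_le_deriv_boundary' (f := fun s => F s - F 0)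
    (a := 0) (b := t)
    (f' := fun s => BoundedContinuousFunction.evalCLM ℝ x
      (semi s (LexcOp d k) ((LexcOp d k - LrwOp d k) (semi (t - s) (LrwOp d k) φ))))
    (B := fun s => K / (2 + t) * (Real.log (1 + s) - Real.log (1 + t - s) + Real.log (1 + t)))
    (B' := fun s => K / ((1 + s) * (1 + (t - s))))
    (fun s _ => ((hd s).continuousAt.sub continuousAt_const).continuousWithinAt)
    (fun s _ => ((hd s).sub_const _).hasDerivWithinAt)
    (by simp)
    (fun s hs => (hB s hs).continuousAt.continuousWithinAt)
    (fun s hs => (hB s (Set.Ico_subset_Icc_self hs)).hasDerivWithinAt)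
    (fun s hs => deriv_bound m0 m1 hm φ hφ x hx s (t - s) hs.1 (by have := hs.2; linarith))
    (Set.right_mem_Icc.2 ht)
  have e1 : F t = semi t (LexcOp d k) φ x := by
    simp [hF, semi_zero]
  have e2 : F 0 = semi t (LrwOp d k) φ x := by
    simp [hF, semi_zero]
  rw [← e1, ← e2, abs_sub_comm]
  refine key.trans (le_of_eq ?_)
  rw [add_sub_cancel_right, Real.log_one]
  ring

lemma sum_le (m0 m1 : Fin d) (hm : m0 ≠ m1) (x : Conf d k) (hx : x ∈ SSet d k)
    (t : ℝ) (ht : 0 ≤ t) (s : Finset (SSet d k)) :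
    ∑ y ∈ s, |ptrw t x y.val - ptl t x y.val| ≤
      (k : ℝ) * k * 225 / (2 + t) * (2 * Real.log (1 + t)) := by
  set c : SSet d k → ℝ := fun y => if 0 ≤ ptrw t x y.val - ptl t x y.val then 1 else -1 with hc
  set φ : BF (Conf d k) := ∑ y ∈ s, c y • dl y.val with hφ
  have hφ1 : ‖φ‖ ≤ 1 := by
    refine (BoundedContinuousFunction.norm_le zero_le_one).2 fun z => ?_
    have e : φ z = ∑ y ∈ s, if z = y.val then c y else 0 := by
      rw [hφ, bf_sum_apply]
      refine Finset.sum_congr rfl fun y _ => ?_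
      change c y * deltaFn y.val z = _
      unfold deltaFn
      split_ifs <;> simp
    rw [e]
    by_cases hz : ∃ y ∈ s, z = y.val
    · obtain ⟨y, hy, rfl⟩ := hz
      rw [Finset.sum_eq_single y]
      · rw [if_pos rfl, hc]
        beta_reduce
        split_ifs <;> simp
      · intro b _ hb
        exact if_neg fun h => hb (Subtype.ext h.symm)
      · intro h; exact absurd hy h
    · push Not at hz
      rw [Finset.sum_eq_zero fun y hy => if_neg (hz y hy)]
      simp
  have h := main_est m0 m1 hm φ hφ1 x hx t ht
  have e : semi t (LrwOp d k) φ x - semi t (LexcOp d k) φ x =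
      ∑ y ∈ s, |ptrw t x y.val - ptl t x y.val| := by
    rw [hφ, map_sum, map_sum, bf_sum_apply, bf_sum_apply, ← Finset.sum_sub_distrib]
    refine Finset.sum_congr rfl fun y _ => ?_
    rw [map_smul, map_smul]
    change c y * semi t (LrwOp d k) (dl y.val) x - c y * semi t (LexcOp d k) (dl y.val) x = _
    rw [← ptrw_eq, ← ptl_eq, ← mul_sub, hc]
    beta_reduce
    split_ifs with h0
    · rw [one_mul, abs_of_nonneg h0]
    · rw [abs_of_neg (not_le.1 h0)]; ring
  rw [← e]
  exact (le_abs_self _).trans h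

lemma num_two (K t : ℝ) (hK : 0 ≤ K) (ht : 0 ≤ t) :
    K / (2 + t) * (2 * Real.log (1 + t)) ≤ (6 * K + 1) * Real.log (t + 2) / (Real.sqrt t + 1) := by
  have h1 : Real.log (1 + t) ≤ Real.log (t + 2) := Real.log_le_log (by linarith) (by linarith)
  have h0 : 0 ≤ Real.log (1 + t) := Real.log_nonneg (by linarith)
  have h2 : Real.sqrt t + 1 ≤ 2 + t := by
    nlinarith [Real.sq_sqrt ht, sq_nonneg (Real.sqrt t - 1)]
  have h3 : 0 ≤ Real.sqrt t := Real.sqrt_nonneg t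
  calc K / (2 + t) * (2 * Real.log (1 + t)) = (2 * K) * Real.log (1 + t) / (2 + t) := by ring
    _ ≤ (6 * K + 1) * Real.log (t + 2) / (Real.sqrt t + 1) := by
      have h7 : 0 ≤ Real.log (t + 2) := h0.trans h1
      have h8 : 2 * K ≤ 6 * K + 1 := by linarith
      have h9 : 0 ≤ (6 * K + 1) * Real.log (t + 2) := mul_nonneg (by linarith) h7
      gcongr

lemma num_three (K t : ℝ) (hK : 0 ≤ K) (ht : 0 ≤ t) :
    K / (2 + t) * (2 * Real.log (1 + t)) ≤ (6 * K + 1) / (Real.sqrt t + 1) := by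
  have h3 : 0 ≤ Real.sqrt t := Real.sqrt_nonneg t
  have h4 := Real.sq_sqrt ht
  have h5 : Real.log (1 + t) ≤ 2 * Real.sqrt t := by
    have : Real.log (1 + t) ≤ Real.log ((1 + Real.sqrt t) ^ 2) :=
      Real.log_le_log (by linarith) (by nlinarith)
    rw [Real.log_pow] at this
    have h6 := Real.log_le_sub_one_of_pos (show 0 < 1 + Real.sqrt t by linarith)
    push_cast at this
    linarith
  rw [div_mul_eq_mul_div, div_le_div_iff₀ (by linarith) (by linarith)]
  have h7 : 2 * Real.sqrt t * (Real.sqrt t + 1) ≤ 3 * (2 + t) := by nlinarith [sq_nonneg (Real.sqrt t - 1)]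
  have h8 : Real.log (1 + t) * (Real.sqrt t + 1) ≤ 3 * (2 + t) :=
    (mul_le_mul_of_nonneg_right h5 (by linarith)).trans h7
  have h9 := mul_le_mul_of_nonneg_left h8 hK
  nlinarith

end Main


/-- Lemma (comparison between `p_t^{rw}` and `p_t^ℓ` in total variation): for integers
`d ≥ 2`, `k ≥ 1` there is a constant `C = C(k,d)` such that for every `x ∈ 𝕊^k` and `t ≥ 0`,
`Σ_{y ∈ 𝕊^k} |p_t^{rw}(x,y) − p_t^ℓ(x,y)|` is at most `C log(t+2)/(√t+1)` when `d = 2`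
and at most `C/(√t+1)` when `d ≥ 3`. -/
theorem rw_exclusion_comparison (d k : ℕ) (hd : 2 ≤ d) (hk : 1 ≤ k) :
    ∃ C : ℝ, 0 < C ∧ ∀ x : Conf d k, x ∈ SSet d k → ∀ t : ℝ, 0 ≤ t →
      Summable (fun y : SSet d k => |ptrw t x y.val - ptl t x y.val|) ∧
      (d = 2 →
        ∑' y : SSet d k, |ptrw t x y.val - ptl t x y.val| ≤
          C * Real.log (t + 2) / (Real.sqrt t + 1)) ∧
      (3 ≤ d →
        ∑' y : SSet d k, |ptrw t x y.val - ptl t x y.val| ≤ C / (Real.sqrt t + 1)) := by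
  have hm : (⟨0, by omega⟩ : Fin d) ≠ ⟨1, by omega⟩ := by simp
  have hK : (0 : ℝ) ≤ (k : ℝ) * k * 225 := by positivity
  refine ⟨6 * ((k : ℝ) * k * 225) + 1, by positivity, fun x hx t ht => ?_⟩
  have hsum := sum_le _ _ hm x hx t ht
  refine ⟨summable_of_sum_le (fun _ => abs_nonneg _) hsum, fun _ => ?_, fun _ => ?_⟩
  · exact (Real.tsum_le_of_sum_le (fun _ => abs_nonneg _) hsum).trans (num_two _ t hK ht)
  · exact (Real.tsum_le_of_sum_le (fun _ => abs_nonneg _) hsum).trans (num_three _ t hK ht)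

end SSEPPaper
end
end

section
/- There exist constants c, C > 0 such that: (i) for all u ∈ [0,1], c u² ≤ Φ(u) ≤ C u²; and (ii) for all u ≥ 1, Φ(u) ≥ c u. -/
noncomputable section

/-- `Φ(u) = sup_{w ∈ ℝ} (uw − w² cosh w)`. -/
def Phi (u : ℝ) : ℝ := ⨆ w : ℝ, (u * w - w ^ 2 * Real.cosh w)

theorem Phi_term_le (u w : ℝ) : u * w - w ^ 2 * Real.cosh w ≤ 1 / 4 * u ^ 2 := by
  nlinarith [sq_nonneg (u / 2 - w), mul_nonneg (sq_nonneg w) (sub_nonneg.2 (Real.one_le_cosh w))]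

theorem le_Phi (u w : ℝ) : u * w - w ^ 2 * Real.cosh w ≤ Phi u :=
  le_ciSup (f := fun w : ℝ => u * w - w ^ 2 * Real.cosh w)
    ⟨1 / 4 * u ^ 2, by rintro _ ⟨w, rfl⟩; exact Phi_term_le u w⟩ w

theorem cosh_le_three (w : ℝ) (h0 : 0 ≤ w) (h1 : w ≤ 1) : Real.cosh w ≤ 3 := by
  have h2 : Real.cosh w ≤ Real.exp (w ^ 2 / 2) := Real.cosh_le_exp_half_sq w
  have h3 : Real.exp (w ^ 2 / 2) ≤ Real.exp 1 := Real.exp_le_exp.2 (by nlinarith)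
  linarith [Real.exp_one_lt_d9]

/-- There are constants `c, C > 0` with `c u² ≤ Φ(u) ≤ C u²` for `u ∈ [0,1]` and
`Φ(u) ≥ c u` for `u ≥ 1`. -/
theorem Phi_bounds :
    ∃ c C : ℝ, 0 < c ∧ 0 < C ∧
      (∀ u : ℝ, 0 ≤ u → u ≤ 1 → c * u ^ 2 ≤ Phi u ∧ Phi u ≤ C * u ^ 2) ∧
      (∀ u : ℝ, 1 ≤ u → c * u ≤ Phi u) := by
  refine ⟨1 / 12, 1 / 4, by norm_num, by norm_num, fun u h0 h1 => ⟨?_, ?_⟩, fun u h1 => ?_⟩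
  · have h := le_Phi u (u / 6)
    have hc := cosh_le_three (u / 6) (by linarith) (by linarith)
    nlinarith [mul_le_mul_of_nonneg_left hc (sq_nonneg (u / 6))]
  · exact ciSup_le fun w => Phi_term_le u w
  · have h := le_Phi u (1 / 6)
    have hc := cosh_le_three (1 / 6) (by norm_num) (by norm_num)
    linarith

end
end
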